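/- Let H²_β be a weighted Hardy space of polynomial growth, and let B(z) = ∏_{j=1}^m (z_j − z)/(1 − conj(z_j)z) be a Blaschke product on 𝔻 with m distinct zero points z_1, …, z_m. Then the sequence {B^n(z)/(β_n (1 − conj(z_j)z)) : 1 ≤ j ≤ m, n = 0, 1, 2, …} is a Riesz basis of H²_β. -/

import Mathlib

noncomputable section

open Complex Filter Topology

/-- The sequence-space (ℓ²) model of a weighted Hardy space `H²_β`.
An element `a : H2` represents the analytic function whose `k`-th Taylor
coefficient is `a k / β k` (so that `‖a‖` is exactly the `H²_β`-norm). -/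
abbrev H2 : Type := lp (fun _ : ℕ => ℂ) 2

/-- The direct sum (ℓ²-sense) of `m` copies of `H2`. -/
abbrev Hm (m : ℕ) : Type := PiLp 2 (fun _ : Fin m => H2)

/-- The open unit disk 𝔻 ⊆ ℂ. -/
def unitDisk : Set ℂ := Metric.ball 0 1

/-- `β_0 = 1` and `β_k = ∏_{j=1}^k w_j`. -/
def betaSeq (w : ℕ → ℝ) (k : ℕ) : ℝ := ∏ j ∈ Finset.Icc 1 k, w j

/-- The analytic function on 𝔻 represented by the vector `a` in the model of `H²_β`:
`f(z) = ∑_k (a k / β k) z^k`. -/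
def repFun (β : ℕ → ℝ) (a : H2) (z : ℂ) : ℂ := ∑' k, (a k / (β k : ℂ)) * z ^ k

/-- `T` is (the ℓ²-model of) the multiplication operator `M_g` on `H²_β`.
Existence of such a `T` says precisely that `M_g` is bounded on `H²_β`. -/
def RepMul (β : ℕ → ℝ) (g : ℂ → ℂ) (T : H2 →L[ℂ] H2) : Prop :=
  ∀ a : H2, ∀ z ∈ unitDisk, repFun β (T a) z = g z * repFun β a z

/-- `T` is (the ℓ²-model of) the composition operator `C_ψ` on `H²_β`.
Existence of such a `T` says precisely that `C_ψ` is bounded on `H²_β`. -/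
def RepComp (β : ℕ → ℝ) (ψ : ℂ → ℂ) (T : H2 →L[ℂ] H2) : Prop :=
  ∀ a : H2, ∀ z ∈ unitDisk, repFun β (T a) z = repFun β a (ψ z)

/-- The Möbius factor `φ_{z₀}(z) = (z₀ - z)/(1 - conj z₀ · z)`. -/
def mobius (z₀ z : ℂ) : ℂ := (z₀ - z) / (1 - (starRingEnd ℂ) z₀ * z)

/-- `φ` belongs to `Aut(𝔻)`, i.e. `φ(z) = e^{iθ}(z₀ - z)/(1 - conj z₀ · z)`. -/
def IsDiskAut (φ : ℂ → ℂ) : Prop :=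
  ∃ (θ : ℝ) (z₀ : ℂ), z₀ ∈ unitDisk ∧
    ∀ z, φ z = Complex.exp (θ * Complex.I) * mobius z₀ z

/-- `B` is a finite Blaschke product of order `m`. -/
def IsBlaschke (m : ℕ) (B : ℂ → ℂ) : Prop :=
  ∃ (θ : ℝ) (zs : Fin m → ℂ), (∀ j, zs j ∈ unitDisk) ∧
    ∀ z, B z = Complex.exp (θ * Complex.I) * ∏ j, mobius (zs j) z

/-- `w` is a positive weight sequence tending to `1` such that the weighted Hardy
space `H²_β` is of polynomial growth: `sup_k (k+1)|w_k - 1| < ∞`. -/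
def PolyGrowth (w : ℕ → ℝ) : Prop :=
  (∀ k, 1 ≤ k → 0 < w k) ∧ Tendsto w atTop (nhds 1) ∧
    ∃ M : ℝ, ∀ k : ℕ, 1 ≤ k → ((k : ℝ) + 1) * |w k - 1| ≤ M

/-- `f` is analytic on an open neighbourhood of the closed unit disk. -/
def AnalyticOnClosedDisk (f : ℂ → ℂ) : Prop :=
  ∃ U : Set ℂ, IsOpen U ∧ Metric.closedBall (0:ℂ) 1 ⊆ U ∧ AnalyticOnNhd ℂ f U

/-- A family in `H2` is a Riesz basis if some bounded invertible operator maps it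
to an orthonormal basis. -/
def RieszBasis {ι : Type} (x : ι → H2) : Prop :=
  ∃ V : H2 ≃L[ℂ] H2, Orthonormal ℂ (fun i => V (x i)) ∧
    (Submodule.span ℂ (Set.range fun i => V (x i))).topologicalClosure = ⊤

/-!
In the unweighted Hardy space multiplication by `B` is an isometry `M = B(S)`, a product of Möbius
functions of the shift `S`. The Szegő kernels `q j = (1 - conj (z j) * z)⁻¹` and their dual family
`p j`, which is proportional to `∏ i ≠ j, φ_{z i}(S) q j`, are orthogonal to the range of `M`.
Hence `M ^ n q j` and `M ^ n p j` are biorthogonal Bessel families, and the first is total because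
no nonzero function is divisible by all powers of `B`: it is a Riesz basis.

Passing to `β` multiplies the `k`-th coefficient of `M ^ n q j` by `β k / β n`, and that of the
dual vector by `β n / β k`, which keeps biorthogonality and the reconstruction formula. Only the
Bessel bounds have to be checked again. Polynomial growth makes `β k / (k + 1) ^ N` decreasing and
`β k * (k + 1) ^ N` increasing for large `N`, so `β k / β n` is polynomially bounded. Estimating
`B ^ n` on a circle of radius `R > 1` and on one of radius `r < 1` where `|B| < 1` shows that the
`k`-th coefficient of `M ^ n q j` decays exponentially in `n + k` unless `n` and `k` are
comparable, and this decay absorbs the factor `β k / β n`. When `n` and `k` are comparable they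
lie in neighbouring dyadic blocks, on each of which `β` is constant up to a bounded factor, so the
unweighted Bessel bound survives.
-/

open scoped ComplexConjugate InnerProductSpace NNReal UnitDisc

section Bessel

variable {𝕜 E ι κ : Type*} [RCLike 𝕜] [NormedAddCommGroup E] [InnerProductSpace 𝕜 E]

variable (𝕜) in
/-- A Bessel sequence: a family whose coefficients `⟪x i, f⟫` are square-summable with sum
bounded by a multiple of `‖f‖ ^ 2`. The bound is stated on finite partial sums. -/
def IsBessel (x : ι → E) : Prop :=
  ∃ C : ℝ, 0 ≤ C ∧ ∀ (f : E) (s : Finset ι), ∑ i ∈ s, ‖⟪x i, f⟫_𝕜‖ ^ 2 ≤ C * ‖f‖ ^ 2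

namespace IsBessel

variable {x y : ι → E}

theorem of_orthonormal (hx : Orthonormal 𝕜 x) : IsBessel 𝕜 x :=
  ⟨1, zero_le_one, fun f s => by rw [one_mul]; exact hx.sum_inner_products_le f⟩

theorem of_summable_norm_sq (hx : Summable fun i => ‖x i‖ ^ 2) : IsBessel 𝕜 x := by
  refine ⟨∑' i, ‖x i‖ ^ 2, tsum_nonneg fun i => by positivity, fun f s => ?_⟩
  calc ∑ i ∈ s, ‖⟪x i, f⟫_𝕜‖ ^ 2
      ≤ ∑ i ∈ s, ‖x i‖ ^ 2 * ‖f‖ ^ 2 := by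
        gcongr with i
        rw [← mul_pow]
        gcongr
        exact norm_inner_le_norm _ _
    _ = (∑ i ∈ s, ‖x i‖ ^ 2) * ‖f‖ ^ 2 := by rw [Finset.sum_mul]
    _ ≤ (∑' i, ‖x i‖ ^ 2) * ‖f‖ ^ 2 := by
        gcongr
        exact hx.sum_le_tsum s fun i _ => by positivity

theorem const_smul (hx : IsBessel 𝕜 x) (a : 𝕜) : IsBessel 𝕜 fun i => a • x i := by
  obtain ⟨C, hC, hxC⟩ := hx
  refine ⟨‖a‖ ^ 2 * C, by positivity, fun f s => ?_⟩
  simp only [inner_smul_left, norm_mul, RCLike.norm_conj, mul_pow, ← Finset.mul_sum, mul_assoc]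
  gcongr
  exact hxC f s

theorem add (hx : IsBessel 𝕜 x) (hy : IsBessel 𝕜 y) : IsBessel 𝕜 fun i => x i + y i := by
  obtain ⟨C, hC, hxC⟩ := hx
  obtain ⟨D, hD, hyD⟩ := hy
  refine ⟨2 * (C + D), by positivity, fun f s => ?_⟩
  calc ∑ i ∈ s, ‖⟪x i + y i, f⟫_𝕜‖ ^ 2
      ≤ ∑ i ∈ s, 2 * (‖⟪x i, f⟫_𝕜‖ ^ 2 + ‖⟪y i, f⟫_𝕜‖ ^ 2) := by
        gcongr with i
        rw [inner_add_left]
        exact (pow_le_pow_left₀ (norm_nonneg _) (norm_add_le _ _) 2).trans (add_sq_le)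
    _ = 2 * (∑ i ∈ s, ‖⟪x i, f⟫_𝕜‖ ^ 2 + ∑ i ∈ s, ‖⟪y i, f⟫_𝕜‖ ^ 2) := by
        rw [← Finset.mul_sum, Finset.sum_add_distrib]
    _ ≤ 2 * (C * ‖f‖ ^ 2 + D * ‖f‖ ^ 2) := by gcongr <;> apply_assumption
    _ = 2 * (C + D) * ‖f‖ ^ 2 := by ring

theorem uncurry [Finite ι] {x : ι → κ → E} (hx : ∀ i, IsBessel 𝕜 (x i)) :
    IsBessel 𝕜 fun p : ι × κ => x p.1 p.2 := by
  classical
  cases nonempty_fintype ι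
  choose C hC hxC using hx
  refine ⟨∑ i, C i, Finset.sum_nonneg fun i _ => hC i, fun f s => ?_⟩
  calc ∑ p ∈ s, ‖⟪x p.1 p.2, f⟫_𝕜‖ ^ 2
      ≤ ∑ p ∈ Finset.univ ×ˢ s.image Prod.snd, ‖⟪x p.1 p.2, f⟫_𝕜‖ ^ 2 := by
        refine Finset.sum_le_sum_of_subset_of_nonneg (fun p hp => ?_) fun _ _ _ => by positivity
        exact Finset.mem_product.2 ⟨Finset.mem_univ _, Finset.mem_image_of_mem _ hp⟩
    _ = ∑ i, ∑ k ∈ s.image Prod.snd, ‖⟪x i k, f⟫_𝕜‖ ^ 2 := Finset.sum_product _ _ _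
    _ ≤ ∑ i, C i * ‖f‖ ^ 2 := Finset.sum_le_sum fun i _ => hxC i f _
    _ = (∑ i, C i) * ‖f‖ ^ 2 := by rw [Finset.sum_mul]

theorem of_norm_inner_le {F : Type*} [NormedAddCommGroup F] [InnerProductSpace 𝕜 F] {u : ι → F}
    (hu : IsBessel 𝕜 u) (level : ι → κ) {P : κ → E → F} {A : ℝ} (hA : 0 ≤ A)
    (hP : ∀ f (t : Finset κ), ∑ q ∈ t, ‖P q f‖ ^ 2 ≤ A * ‖f‖ ^ 2)
    (hx : ∀ i f, ‖⟪x i, f⟫_𝕜‖ ≤ ‖⟪u i, P (level i) f⟫_𝕜‖) : IsBessel 𝕜 x := by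
  classical
  obtain ⟨C, hC, huC⟩ := hu
  refine ⟨C * A, by positivity, fun f s => ?_⟩
  calc ∑ i ∈ s, ‖⟪x i, f⟫_𝕜‖ ^ 2
      ≤ ∑ i ∈ s, ‖⟪u i, P (level i) f⟫_𝕜‖ ^ 2 := by gcongr with i; exact hx i f
    _ = ∑ q ∈ s.image level, ∑ i ∈ s with level i = q, ‖⟪u i, P (level i) f⟫_𝕜‖ ^ 2 :=
        (Finset.sum_fiberwise_of_maps_to (fun _ => Finset.mem_image_of_mem _) _).symm
    _ = ∑ q ∈ s.image level, ∑ i ∈ s with level i = q, ‖⟪u i, P q f⟫_𝕜‖ ^ 2 :=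
        Finset.sum_congr rfl fun q _ => Finset.sum_congr rfl fun i hi => by
          rw [(Finset.mem_filter.1 hi).2]
    _ ≤ ∑ q ∈ s.image level, C * ‖P q f‖ ^ 2 := by gcongr with q; exact huC _ _
    _ ≤ C * A * ‖f‖ ^ 2 := by
        rw [← Finset.mul_sum, mul_assoc]
        gcongr
        exact hP f _

/-- The analysis operator `f ↦ (⟪x i, f⟫)ᵢ` of a Bessel sequence. -/
def analysis (hx : IsBessel 𝕜 x) : E →L[𝕜] lp (fun _ : ι => 𝕜) 2 :=
  LinearMap.mkContinuousOfExistsBound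
    { toFun := fun f => ⟨fun i => ⟪x i, f⟫_𝕜, by
        obtain ⟨C, -, hxC⟩ := hx
        exact memℓp_gen' (C := C * ‖f‖ ^ 2) fun s => by simpa using hxC f s⟩
      map_add' := fun f g => lp.ext (funext fun i => inner_add_right _ _ _)
      map_smul' := fun a f => lp.ext (funext fun i => inner_smul_right _ _ _) } <| by
    obtain ⟨C, hC, hxC⟩ := hx
    refine ⟨√C, fun f => lp.norm_le_of_forall_sum_le (by norm_num) (by positivity) fun s => ?_⟩
    simpa [mul_pow, Real.sq_sqrt hC] using hxC f s

@[simp]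
theorem analysis_apply (hx : IsBessel 𝕜 x) (f : E) (i : ι) : hx.analysis f i = ⟪x i, f⟫_𝕜 := rfl

variable [CompleteSpace E]

@[simp]
theorem adjoint_analysis_single [DecidableEq ι] (hx : IsBessel 𝕜 x) (i : ι) :
    hx.analysis.adjoint (lp.single 2 i 1) = x i := by
  refine ext_inner_right 𝕜 fun f => ?_
  rw [ContinuousLinearMap.adjoint_inner_left, lp.inner_single_left, analysis_apply]
  simp

theorem analysis_comp_adjoint_analysis [DecidableEq ι] (hx : IsBessel 𝕜 x) (hy : IsBessel 𝕜 y)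
    (hxy : ∀ i j, ⟪y i, x j⟫_𝕜 = if i = j then 1 else 0) :
    hy.analysis ∘L hx.analysis.adjoint = .id 𝕜 _ := by
  refine lp.ext_continuousLinearMap ENNReal.ofNat_ne_top fun j => ?_
  ext i
  simp [hxy, Pi.single_apply]

theorem adjoint_analysis_comp_analysis [DecidableEq ι] (hx : IsBessel 𝕜 x) (hy : IsBessel 𝕜 y)
    (hxy : ∀ i j, ⟪y i, x j⟫_𝕜 = if i = j then 1 else 0)
    (htotal : ∀ f, (∀ i, ⟪x i, f⟫_𝕜 = 0) → f = 0) :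
    hx.analysis.adjoint ∘L hy.analysis = .id 𝕜 _ := by
  have hinj : Function.Injective hx.analysis :=
    (injective_iff_map_eq_zero _).2 fun f hf => htotal f fun i => by
      rw [← hx.analysis_apply, hf, lp.coeFn_zero, Pi.zero_apply]
  have hyx : ∀ i j, ⟪x i, y j⟫_𝕜 = if i = j then 1 else 0 := fun i j => by
    rw [← inner_conj_symm, hxy]
    split_ifs <;> simp_all
  have hleft : hx.analysis ∘L hy.analysis.adjoint = .id 𝕜 _ :=
    hy.analysis_comp_adjoint_analysis hx hyx
  have hright : hy.analysis.adjoint ∘L hx.analysis = .id 𝕜 _ := by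
    ext1 f
    exact hinj (congr($hleft (hx.analysis f)))
  rw [← hy.analysis.adjoint_adjoint, ← ContinuousLinearMap.adjoint_comp,
    hright, ContinuousLinearMap.adjoint_id]

theorem hasSum_inner_mul_inner (hx : IsBessel 𝕜 x) (hy : IsBessel 𝕜 y) (f g : E) :
    HasSum (fun i => ⟪f, x i⟫_𝕜 * ⟪y i, g⟫_𝕜) ⟪f, (hx.analysis.adjoint ∘L hy.analysis) g⟫_𝕜 := by
  rw [ContinuousLinearMap.comp_apply, ContinuousLinearMap.adjoint_inner_right]
  convert lp.hasSum_inner (𝕜 := 𝕜) (hx.analysis f) (hy.analysis g) using 2 with i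
  rw [analysis_apply, analysis_apply, RCLike.inner_apply', inner_conj_symm]

theorem exists_continuousLinearEquiv_single [DecidableEq ι] (hx : IsBessel 𝕜 x)
    (hy : IsBessel 𝕜 y) (hxy : ∀ i j, ⟪y i, x j⟫_𝕜 = if i = j then 1 else 0)
    (h : hx.analysis.adjoint ∘L hy.analysis = .id 𝕜 _) :
    ∃ V : E ≃L[𝕜] lp (fun _ : ι => 𝕜) 2, ∀ i, V (x i) = lp.single 2 i 1 := by
  have h' := hx.analysis_comp_adjoint_analysis hy hxy
  refine ⟨.equivOfInverse hy.analysis hx.analysis.adjoint (fun f => congr($h f))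
    fun a => congr($h' a), fun i => ?_⟩
  ext j
  simp [hxy, Pi.single_apply]

end IsBessel

end Bessel

section RieszCriterion

variable {κ : Type} {x y : κ → H2}

theorem nonempty_hilbertBasis_H2 (κ : Type) [Countable κ] [Infinite κ] :
    Nonempty (HilbertBasis κ ℂ H2) := by
  obtain ⟨e⟩ := nonempty_equiv_of_countable (α := κ) (β := ℕ)
  let b : HilbertBasis ℕ ℂ H2 := ⟨.refl ℂ H2⟩
  refine ⟨HilbertBasis.mk (b.orthonormal.comp e e.injective) ?_⟩
  rw [e.surjective.range_comp, b.dense_span]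

theorem IsBessel.rieszBasis [Countable κ] [Infinite κ] [DecidableEq κ] (hx : IsBessel ℂ x)
    (hy : IsBessel ℂ y) (hxy : ∀ i j, inner ℂ (y i) (x j) = if i = j then 1 else 0)
    (h : hx.analysis.adjoint ∘L hy.analysis = .id ℂ H2) : RieszBasis x := by
  obtain ⟨V, hV⟩ := hx.exists_continuousLinearEquiv_single hy hxy h
  obtain ⟨b⟩ := nonempty_hilbertBasis_H2 κ
  have hb : (fun i => V.trans b.repr.symm.toContinuousLinearEquiv (x i)) = b := by
    ext1 i
    simp [hV]
  refine ⟨V.trans b.repr.symm.toContinuousLinearEquiv, ?_, ?_⟩ <;> rw [hb]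
  exacts [b.orthonormal, b.dense_span]

theorem hasSum_conj_mul_apply (f g : H2) : HasSum (fun k => conj (f k) * g k) (inner ℂ f g) := by
  simpa [mul_comm] using lp.hasSum_inner (𝕜 := ℂ) f g

theorem inner_single_one_left (k : ℕ) (f : H2) : inner ℂ (lp.single 2 k 1) f = f k := by
  simp [lp.inner_single_left]

theorem inner_single_one_right (k : ℕ) (f : H2) : inner ℂ f (lp.single 2 k 1) = conj (f k) := by
  simp [lp.inner_single_right]

theorem IsBessel.adjoint_comp_analysis_eq_id_iff (hx : IsBessel ℂ x) (hy : IsBessel ℂ y) :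
    hx.analysis.adjoint ∘L hy.analysis = .id ℂ H2 ↔
      ∀ l k, HasSum (fun i => x i l * conj (y i k)) (if l = k then 1 else 0) := by
  have hsum (l k) : HasSum (fun i => x i l * conj (y i k))
      ((hx.analysis.adjoint ∘L hy.analysis) (lp.single 2 k 1) l) := by
    simpa only [inner_single_one_left, inner_single_one_right] using
      hx.hasSum_inner_mul_inner hy (lp.single 2 l 1) (lp.single 2 k 1)
  have hsingle (l k) : (lp.single 2 k 1 : H2) l = if l = k then 1 else 0 := by
    rw [lp.single_apply, Pi.single_apply]
  refine ⟨fun h l k => ?_, fun h => lp.ext_continuousLinearMap ENNReal.ofNat_ne_top fun k => ?_⟩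
  · simpa only [h, ContinuousLinearMap.id_apply, hsingle] using hsum l k
  · ext l
    exact (hsum l k).unique (by convert h l k; exact hsingle l k)

theorem inner_eq_inner_of_apply_eq_mul_div {f g f' g' : H2} {t : ℕ → ℝ} {a b : ℝ}
    (ht : ∀ k, t k ≠ 0) (hf : ∀ k, f' k = f k * (a / t k : ℝ))
    (hg : ∀ k, g' k = g k * (t k / b : ℝ)) : inner ℂ f' g' = inner ℂ f g * (a / b : ℝ) := by
  refine (hasSum_conj_mul_apply f' g').unique ?_
  refine ((hasSum_conj_mul_apply f g).mul_right ((a / b : ℝ) : ℂ)).congr_fun fun k => ?_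
  rw [hf, hg, map_mul, conj_ofReal]
  have := ofReal_ne_zero.2 (ht k)
  push_cast
  field_simp

theorem IsBessel.rieszBasis_of_rescaled [Countable κ] [Infinite κ] [DecidableEq κ]
    {x' y' : κ → H2} {s : κ → ℝ} {t : ℕ → ℝ} (hs : ∀ i, s i ≠ 0) (ht : ∀ k, t k ≠ 0)
    (hx : IsBessel ℂ x) (hy : IsBessel ℂ y)
    (hxy : ∀ i j, inner ℂ (y i) (x j) = if i = j then 1 else 0)
    (h : hx.analysis.adjoint ∘L hy.analysis = .id ℂ H2)
    (hx' : IsBessel ℂ x') (hy' : IsBessel ℂ y')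
    (hxx' : ∀ i k, x' i k = x i k * (t k / s i : ℝ))
    (hyy' : ∀ i k, y' i k = y i k * (s i / t k : ℝ)) : RieszBasis x' := by
  refine hx'.rieszBasis hy' (fun i j => ?_) ((hx'.adjoint_comp_analysis_eq_id_iff hy').2 ?_)
  · rw [inner_eq_inner_of_apply_eq_mul_div ht (hyy' i) (hxx' j), hxy]
    rcases eq_or_ne i j with rfl | hij
    · simp [hs i]
    · simp [hij]
  · intro l k
    have hsum := ((hx.adjoint_comp_analysis_eq_id_iff hy).1 h l k).mul_right ((t l / t k : ℝ) : ℂ)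
    have hdiag : (if l = k then 1 else 0) * ((t l / t k : ℝ) : ℂ) = if l = k then 1 else 0 := by
      rcases eq_or_ne l k with rfl | hlk
      · simp [ht l]
      · simp [hlk]
    rw [hdiag] at hsum
    refine hsum.congr_fun fun i => ?_
    rw [hxx', hyy', map_mul, conj_ofReal]
    have := ofReal_ne_zero.2 (hs i)
    push_cast
    field_simp

end RieszCriterion

section WanderingVectors

variable {𝕜 E : Type*} [RCLike 𝕜] [NormedAddCommGroup E] [InnerProductSpace 𝕜 E]

theorem inner_pow_map_pow_map (M : E →ₗᵢ[𝕜] E) {g h : E} (hg : ∀ f, ⟪g, M f⟫_𝕜 = 0)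
    (hh : ∀ f, ⟪h, M f⟫_𝕜 = 0) (n l : ℕ) :
    ⟪(M ^ n) g, (M ^ l) h⟫_𝕜 = if n = l then ⟪g, h⟫_𝕜 else 0 := by
  induction n generalizing l with
  | zero =>
    cases l with
    | zero => simp
    | succ l => simp [pow_succ', hg]
  | succ n ih =>
    cases l with
    | zero => simp [pow_succ', ← inner_conj_symm (M _) h, hh]
    | succ l => simp [pow_succ', ih]

theorem isBessel_pow_map (M : E →ₗᵢ[𝕜] E) {g : E} (hg : ∀ f, ⟪g, M f⟫_𝕜 = 0) :
    IsBessel 𝕜 fun n : ℕ => (M ^ n) g := by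
  rcases eq_or_ne g 0 with rfl | hg0
  · exact .of_summable_norm_sq (by simp)
  have hnorm : (‖g‖ : 𝕜) ≠ 0 := by simpa using hg0
  have horth : Orthonormal 𝕜 fun n : ℕ => (‖g‖ : 𝕜)⁻¹ • (M ^ n) g := by
    classical
    refine orthonormal_iff_ite.2 fun n l => ?_
    rw [inner_smul_left, inner_smul_right, inner_pow_map_pow_map M hg hg, map_inv₀,
      RCLike.conj_ofReal, inner_self_eq_norm_sq_to_K]
    split_ifs
    · field_simp
    · simp
  simpa [smul_smul, hnorm] using (IsBessel.of_orthonormal horth).const_smul (‖g‖ : 𝕜)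

theorem inner_map_pow_of_inner_map {M : E →ₗᵢ[𝕜] E} {q : E} {b : 𝕜}
    (hq : ∀ f, ⟪q, M f⟫_𝕜 = b * ⟪q, f⟫_𝕜) (n : ℕ) (f : E) :
    ⟪q, (M ^ n) f⟫_𝕜 = b ^ n * ⟪q, f⟫_𝕜 := by
  induction n with
  | zero => simp
  | succ n ih => rw [pow_succ', LinearIsometry.coe_mul, Function.comp_apply, hq, ih, pow_succ',
      mul_assoc]

theorem seminorm_pow_map_le {M : E →ₗᵢ[𝕜] E} {p : Seminorm 𝕜 E} {γ : ℝ} (hγ : 0 ≤ γ)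
    (hM : ∀ f, p (M f) ≤ γ * p f) (n : ℕ) (f : E) : p ((M ^ n) f) ≤ γ ^ n * p f := by
  induction n with
  | zero => simp
  | succ n ih =>
    calc p ((M ^ (n + 1)) f) = p (M ((M ^ n) f)) := by rw [pow_succ']; rfl
      _ ≤ γ * p ((M ^ n) f) := hM _
      _ ≤ γ * (γ ^ n * p f) := by gcongr
      _ = γ ^ (n + 1) * p f := by ring

end WanderingVectors

section MobiusFunction

theorem one_sub_conj_mul_ne_zero (a z : 𝔻) : 1 - conj (a : ℂ) * z ≠ 0 :=
  sub_ne_zero.2 (star a * z).coe_ne_one.symm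

theorem mobius_eq_zero_iff {a z : 𝔻} : mobius a z = 0 ↔ a = z := by
  rw [mobius, div_eq_zero_iff, or_iff_left (one_sub_conj_mul_ne_zero a z), sub_eq_zero,
    UnitDisc.coe_inj]

variable {E : Type*} [NormedAddCommGroup E] [InnerProductSpace ℂ E] (S : E →ₗᵢ[ℂ] E) (a : 𝔻)

theorem norm_smul_sub_map_eq (h : E) :
    ‖(a : ℂ) • h - S h‖ = ‖h - conj (a : ℂ) • S h‖ := by
  rw [← sq_eq_sq₀ (norm_nonneg _) (norm_nonneg _), @norm_sub_sq ℂ, @norm_sub_sq ℂ,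
    inner_smul_left, inner_smul_right, norm_smul, norm_smul, S.norm_map, RCLike.norm_conj]
  ring

variable [CompleteSpace E]

theorem norm_conj_smul_toContinuousLinearMap_lt_one :
    ‖conj (a : ℂ) • S.toContinuousLinearMap‖ < 1 := by
  rw [norm_smul, RCLike.norm_conj]
  exact (mul_le_of_le_one_right (norm_nonneg _) S.norm_toContinuousLinearMap_le).trans_lt
    a.norm_lt_one

/-- The Möbius function `φ_a(S) = (a - S) (1 - conj a • S)⁻¹` of an isometry `S`. -/
def mobiusMap : E →ₗᵢ[ℂ] E where
  toLinearMap := (((a : ℂ) • 1 - S.toContinuousLinearMap) *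
    ↑(Units.oneSub _ (norm_conj_smul_toContinuousLinearMap_lt_one S a))⁻¹ : E →L[ℂ] E)
  norm_map' f := by
    set D := Units.oneSub _ (norm_conj_smul_toContinuousLinearMap_lt_one S a)
    have hD : (D : E →L[ℂ] E) ((↑D⁻¹ : E →L[ℂ] E) f) = f := congr($(D.mul_inv) f)
    exact (norm_smul_sub_map_eq S a _).trans (congrArg norm hD)

theorem mobiusMap_sub_conj_smul (h : E) :
    mobiusMap S a (h - conj (a : ℂ) • S h) = (a : ℂ) • h - S h := by
  set D := Units.oneSub _ (norm_conj_smul_toContinuousLinearMap_lt_one S a)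
  have hD : (↑D⁻¹ : E →L[ℂ] E) ((D : E →L[ℂ] E) h) = h := congr($(D.inv_mul) h)
  exact congrArg (fun g => (a : ℂ) • g - S g) hD

theorem exists_sub_conj_smul_eq (f : E) : ∃ h, h - conj (a : ℂ) • S h = f := by
  set D := Units.oneSub _ (norm_conj_smul_toContinuousLinearMap_lt_one S a)
  exact ⟨(↑D⁻¹ : E →L[ℂ] E) f, congr($(D.mul_inv) f)⟩

variable {S a}

theorem commute_mobiusMap {T : E →ₗᵢ[ℂ] E} (h : Commute T S) : Commute T (mobiusMap S a) := by
  ext f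
  obtain ⟨g, rfl⟩ := exists_sub_conj_smul_eq S a f
  have hTS : T (S g) = S (T g) := congr($h g)
  calc T (mobiusMap S a (g - conj (a : ℂ) • S g)) = (a : ℂ) • T g - S (T g) := by
        rw [mobiusMap_sub_conj_smul, map_sub, map_smul, hTS]
    _ = mobiusMap S a (T (g - conj (a : ℂ) • S g)) := by
        rw [← mobiusMap_sub_conj_smul, map_sub T, map_smul T, hTS]

theorem commute_mobiusMap_mobiusMap (a b : 𝔻) : Commute (mobiusMap S a) (mobiusMap S b) :=
  commute_mobiusMap (commute_mobiusMap (Commute.refl S)).symm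

theorem inner_mobiusMap {q : E} {z : 𝔻} (hq : ∀ f, ⟪q, S f⟫_ℂ = z * ⟪q, f⟫_ℂ) (f : E) :
    ⟪q, mobiusMap S a f⟫_ℂ = mobius a z * ⟪q, f⟫_ℂ := by
  obtain ⟨h, rfl⟩ := exists_sub_conj_smul_eq S a f
  rw [mobiusMap_sub_conj_smul, mobius, div_mul_eq_mul_div,
    eq_div_iff (one_sub_conj_mul_ne_zero a z)]
  simp only [inner_sub_right, inner_smul_right, hq]
  ring

theorem mem_range_mobiusMap {f : E}
    (hf : ∀ q, (∀ g, ⟪q, S g⟫_ℂ = a * ⟪q, g⟫_ℂ) → ⟪q, f⟫_ℂ = 0) :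
    f ∈ LinearMap.range (mobiusMap S a).toLinearMap := by
  have : CompleteSpace (LinearMap.range (mobiusMap S a).toLinearMap) :=
    (mobiusMap S a).isometry.isClosedEmbedding.isClosed_range.completeSpace_coe
  rw [← Submodule.orthogonal_orthogonal (LinearMap.range _), Submodule.mem_orthogonal]
  refine fun q hq => hf q fun g => ?_
  have hqg : ⟪q, (a : ℂ) • g - S g⟫_ℂ = 0 := by
    rw [← mobiusMap_sub_conj_smul]
    exact Submodule.inner_left_of_mem_orthogonal (LinearMap.mem_range_self _ _) hq
  rw [inner_sub_right, inner_smul_right, sub_eq_zero] at hqg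
  exact hqg.symm

theorem seminorm_mobiusMap_le {p : Seminorm ℂ E} {r : ℝ} (hr : 0 ≤ r) (har : ‖(a : ℂ)‖ * r < 1)
    (hS : ∀ f, p (S f) ≤ r * p f) (f : E) :
    p (mobiusMap S a f) ≤ (‖(a : ℂ)‖ + r) / (1 - ‖(a : ℂ)‖ * r) * p f := by
  obtain ⟨h, rfl⟩ := exists_sub_conj_smul_eq S a f
  have hlower : (1 - ‖(a : ℂ)‖ * r) * p h ≤ p (h - conj (a : ℂ) • S h) := by
    have htri := map_add_le_add p (h - conj (a : ℂ) • S h) (conj (a : ℂ) • S h)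
    rw [sub_add_cancel, map_smul_eq_mul p, RCLike.norm_conj] at htri
    nlinarith [mul_le_mul_of_nonneg_left (hS h) (norm_nonneg (a : ℂ))]
  have hupper : p ((a : ℂ) • h - S h) ≤ (‖(a : ℂ)‖ + r) * p h := by
    calc p ((a : ℂ) • h - S h) ≤ p ((a : ℂ) • h) + p (S h) := map_sub_le_add p _ _
      _ ≤ ‖(a : ℂ)‖ * p h + r * p h := by
        rw [map_smul_eq_mul]
        gcongr
        exact hS h
      _ = (‖(a : ℂ)‖ + r) * p h := by ring
  rw [mobiusMap_sub_conj_smul, div_mul_eq_mul_div, le_div_iff₀ (by linarith)]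
  calc p ((a : ℂ) • h - S h) * (1 - ‖(a : ℂ)‖ * r)
      ≤ (‖(a : ℂ)‖ + r) * p h * (1 - ‖(a : ℂ)‖ * r) := by
        gcongr
    _ = (‖(a : ℂ)‖ + r) * ((1 - ‖(a : ℂ)‖ * r) * p h) := by ring
    _ ≤ (‖(a : ℂ)‖ + r) * p (h - conj (a : ℂ) • S h) := by gcongr

end MobiusFunction

section BlaschkeFunction

variable {ι E : Type*} [NormedAddCommGroup E] [InnerProductSpace ℂ E] [CompleteSpace E]
  (S : E →ₗᵢ[ℂ] E) (a : ι → 𝔻)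

/-- The Blaschke product with zeros `a j`, `j ∈ s`, evaluated at the isometry `S`. -/
def blaschkeMap (s : Finset ι) : E →ₗᵢ[ℂ] E :=
  s.noncommProd (fun j => mobiusMap S (a j)) fun _ _ _ _ _ => commute_mobiusMap_mobiusMap _ _

variable {S a} {s : Finset ι}

variable (a s) in
/-- The maximum modulus on the circle of radius `r` of the Blaschke product with zeros `a j`,
`j ∈ s`, estimated factor by factor; meaningful while `‖a j‖ * r < 1`. -/
def blaschkeBound (r : ℝ) : ℝ := ∏ j ∈ s, (‖(a j : ℂ)‖ + r) / (1 - ‖(a j : ℂ)‖ * r)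

theorem blaschkeBound_nonneg {r : ℝ} (hr : 0 ≤ r) (har : ∀ j, ‖(a j : ℂ)‖ * r < 1) :
    0 ≤ blaschkeBound a s r :=
  Finset.prod_nonneg fun j _ => div_nonneg (by positivity) (sub_nonneg.2 (har j).le)

theorem blaschkeBound_pos {r : ℝ} (hr : 0 < r) (har : ∀ j, ‖(a j : ℂ)‖ * r < 1) :
    0 < blaschkeBound a s r :=
  Finset.prod_pos fun j _ => div_pos (by positivity) (sub_pos.2 (har j))

theorem exists_blaschkeBound_lt_one (hs : s.Nonempty) :
    ∃ r : ℝ, 0 < r ∧ r < 1 ∧ blaschkeBound a s r < 1 := by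
  have hcont : ContinuousAt (blaschkeBound a s) 0 := by
    unfold blaschkeBound
    fun_prop (disch := simp)
  have hzero : blaschkeBound a s 0 < 1 := by
    classical
    obtain ⟨i, hi⟩ := hs
    simp only [blaschkeBound, add_zero, mul_zero, sub_zero, div_one, ← Finset.mul_prod_erase s _ hi]
    exact mul_lt_one_of_nonneg_of_lt_one_left (norm_nonneg _) (a i).norm_lt_one <|
      Finset.prod_le_one (fun _ _ => norm_nonneg _) fun j _ => (a j).norm_lt_one.le
  have hr : ∀ᶠ r in 𝓝[>] 0, blaschkeBound a s r < 1 :=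
    nhdsWithin_le_nhds (hcont.eventually_lt_const hzero)
  have hIoo : ∀ᶠ r : ℝ in 𝓝[>] 0, r ∈ Set.Ioo 0 1 := Ioo_mem_nhdsGT one_pos
  obtain ⟨r, ⟨hr0, hr1⟩, hr⟩ := (hIoo.and hr).exists
  exact ⟨r, hr0, hr1, hr⟩

theorem prod_mobius_ne_zero (ha : Function.Injective a) {i : ι} (hi : i ∉ s) :
    ∏ j ∈ s, mobius (a j) (a i) ≠ 0 :=
  Finset.prod_ne_zero_iff.2 fun _ hj h => hi (ha (mobius_eq_zero_iff.1 h) ▸ hj)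

@[simp]
theorem blaschkeMap_empty : blaschkeMap S a ∅ = 1 := Finset.noncommProd_empty _ _

theorem blaschkeMap_insert [DecidableEq ι] {j : ι} (hj : j ∉ s) :
    blaschkeMap S a (insert j s) = blaschkeMap S a s * mobiusMap S (a j) :=
  Finset.noncommProd_insert_of_notMem' _ _ _ _ hj

theorem blaschkeMap_erase_mul [DecidableEq ι] {j : ι} (hj : j ∈ s) :
    blaschkeMap S a (s.erase j) * mobiusMap S (a j) = blaschkeMap S a s :=
  Finset.noncommProd_erase_mul _ hj _ _

theorem inner_blaschkeMap {q : E} {z : 𝔻} (hq : ∀ f, ⟪q, S f⟫_ℂ = z * ⟪q, f⟫_ℂ) (f : E) :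
    ⟪q, blaschkeMap S a s f⟫_ℂ = (∏ j ∈ s, mobius (a j) z) * ⟪q, f⟫_ℂ := by
  classical
  induction s using Finset.induction_on generalizing f with
  | empty => simp
  | insert j s hj ih =>
    rw [blaschkeMap_insert hj, LinearIsometry.coe_mul, Function.comp_apply, ih,
      inner_mobiusMap hq, Finset.prod_insert hj]
    ring

theorem seminorm_blaschkeMap_le {p : Seminorm ℂ E} {r : ℝ} (hr : 0 ≤ r)
    (har : ∀ j, ‖(a j : ℂ)‖ * r < 1) (hS : ∀ f, p (S f) ≤ r * p f) (f : E) :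
    p (blaschkeMap S a s f) ≤ blaschkeBound a s r * p f := by
  classical
  induction s using Finset.induction_on generalizing f with
  | empty => simp [blaschkeBound]
  | insert j s hj ih =>
    rw [blaschkeMap_insert hj, blaschkeBound, Finset.prod_insert hj, mul_comm (_ / _), mul_assoc]
    exact (ih _).trans <| mul_le_mul_of_nonneg_left (seminorm_mobiusMap_le hr (har j) hS f) <|
      blaschkeBound_nonneg hr har

theorem mem_range_blaschkeMap (ha : Function.Injective a) {f : E}
    (hf : ∀ j ∈ s, ∀ q, (∀ g, ⟪q, S g⟫_ℂ = a j * ⟪q, g⟫_ℂ) → ⟪q, f⟫_ℂ = 0) :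
    ∃ g, blaschkeMap S a s g = f := by
  classical
  induction s using Finset.induction_on with
  | empty => exact ⟨f, by simp⟩
  | insert i s hi ih =>
    obtain ⟨g, rfl⟩ := ih fun j hj => hf j (Finset.mem_insert_of_mem hj)
    have hg : ∀ q, (∀ h, ⟪q, S h⟫_ℂ = a i * ⟪q, h⟫_ℂ) → ⟪q, g⟫_ℂ = 0 := fun q hq => by
      have hfq := hf i (Finset.mem_insert_self i s) q hq
      rw [inner_blaschkeMap hq] at hfq
      exact (mul_eq_zero.1 hfq).resolve_left (prod_mobius_ne_zero ha hi)
    obtain ⟨h, rfl⟩ := mem_range_mobiusMap hg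
    exact ⟨h, by rw [blaschkeMap_insert hi]; rfl⟩

theorem inner_blaschkeMap_eq_zero {j : ι} (hj : j ∈ s) {q : E}
    (hq : ∀ f, ⟪q, S f⟫_ℂ = a j * ⟪q, f⟫_ℂ) (f : E) : ⟪q, blaschkeMap S a s f⟫_ℂ = 0 := by
  rw [inner_blaschkeMap hq, Finset.prod_eq_zero hj (mobius_eq_zero_iff.2 rfl), zero_mul]

theorem mem_range_pow_blaschkeMap [Fintype ι] {q : ι → E} (ha : Function.Injective a)
    (hspan : ∀ j p, (∀ g, ⟪p, S g⟫_ℂ = a j * ⟪p, g⟫_ℂ) → p ∈ Submodule.span ℂ {q j}) {f : E}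
    (hf : ∀ j n, ⟪(blaschkeMap S a .univ ^ n) (q j), f⟫_ℂ = 0) (n : ℕ) :
    ∃ g, (blaschkeMap S a .univ ^ n) g = f := by
  induction n with
  | zero => exact ⟨f, by simp⟩
  | succ n ih =>
    obtain ⟨g, rfl⟩ := ih
    have hg (j) : ⟪q j, g⟫_ℂ = 0 := by rw [← hf j n, LinearIsometry.inner_map_map]
    obtain ⟨h, rfl⟩ := mem_range_blaschkeMap (s := .univ) ha fun j _ p hp => by
      obtain ⟨c, rfl⟩ := Submodule.mem_span_singleton.1 (hspan j p hp)
      rw [inner_smul_left, hg, mul_zero]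
    exact ⟨h, by rw [pow_succ]; rfl⟩

variable [DecidableEq ι]

variable (S a) in
/-- The multiple of `∏_{i ∈ s, i ≠ j} φ_{a i}(S) q` normalised to have inner product `1` with `q`.
For an eigenvector `q = q j` of the adjoint of `S` with eigenvalue `conj (a j)`, these are the
vectors biorthogonal to the `q j` in the orthogonal complement of the range of
`blaschkeMap S a s`. -/
def blaschkeDual (s : Finset ι) (q : E) (j : ι) : E :=
  (⟪q, blaschkeMap S a (s.erase j) q⟫_ℂ)⁻¹ • blaschkeMap S a (s.erase j) q

theorem inner_blaschkeDual_map {j : ι} (hj : j ∈ s) {q : E}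
    (hq : ∀ f, ⟪q, S f⟫_ℂ = a j * ⟪q, f⟫_ℂ) (f : E) :
    ⟪blaschkeDual S a s q j, blaschkeMap S a s f⟫_ℂ = 0 := by
  rw [blaschkeDual, inner_smul_left, ← blaschkeMap_erase_mul hj, LinearIsometry.coe_mul,
    Function.comp_apply, LinearIsometry.inner_map_map, inner_mobiusMap hq,
    mobius_eq_zero_iff.2 rfl, zero_mul, mul_zero]

variable {q : ι → E}

theorem inner_blaschkeDual (ha : Function.Injective a) (hq0 : ∀ j, q j ≠ 0)
    (hq : ∀ j f, ⟪q j, S f⟫_ℂ = a j * ⟪q j, f⟫_ℂ) {i j : ι} (hj : j ∈ s) :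
    ⟪q j, blaschkeDual S a s (q i) i⟫_ℂ = if i = j then 1 else 0 := by
  rw [blaschkeDual, inner_smul_right]
  split_ifs with hij
  · subst hij
    refine inv_mul_cancel₀ ?_
    rw [inner_blaschkeMap (hq i)]
    exact mul_ne_zero (prod_mobius_ne_zero ha (s.notMem_erase i)) (inner_self_ne_zero.2 (hq0 i))
  · rw [inner_blaschkeMap_eq_zero (Finset.mem_erase.2 ⟨Ne.symm hij, hj⟩) (hq j), mul_zero]

theorem inner_pow_blaschkeDual [Fintype ι] (ha : Function.Injective a) (hq0 : ∀ j, q j ≠ 0)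
    (hq : ∀ j f, ⟪q j, S f⟫_ℂ = a j * ⟪q j, f⟫_ℂ) (i j : ι × ℕ) :
    ⟪(blaschkeMap S a .univ ^ i.2) (blaschkeDual S a .univ (q i.1) i.1),
      (blaschkeMap S a .univ ^ j.2) (q j.1)⟫_ℂ = if i = j then 1 else 0 := by
  rw [inner_pow_map_pow_map _ (inner_blaschkeDual_map (Finset.mem_univ _) (hq i.1))
    (inner_blaschkeMap_eq_zero (Finset.mem_univ _) (hq j.1)), ← inner_conj_symm,
    inner_blaschkeDual ha hq0 hq (Finset.mem_univ _)]
  simp only [Prod.ext_iff]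
  split_ifs <;> simp_all

end BlaschkeFunction

section HardySpace

theorem memℓp_two_of_summable_norm_sq {f : ℕ → ℂ} (hf : Summable fun k => ‖f k‖ ^ 2) :
    Memℓp f 2 :=
  memℓp_gen (by simpa using hf)

theorem hasSum_norm_sq (f : H2) : HasSum (fun k => ‖f k‖ ^ 2) (‖f‖ ^ 2) := by
  simpa using lp.hasSum_norm (p := 2) (by norm_num) f

/-- The sequence `(0, f 0, f 1, …)`. -/
def shiftSeq (f : ℕ → ℂ) : ℕ → ℂ
  | 0 => 0
  | k + 1 => f k

theorem hasSum_norm_sq_shiftSeq (f : H2) :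
    HasSum (fun k => ‖shiftSeq f k‖ ^ 2) (‖f‖ ^ 2) := by
  rw [← hasSum_nat_add_iff' 1]
  simpa [shiftSeq] using hasSum_norm_sq f

/-- The unilateral shift on `ℓ²`, which is multiplication by `z` on the unweighted Hardy space. -/
def shift : H2 →ₗᵢ[ℂ] H2 where
  toFun f := ⟨shiftSeq f, memℓp_two_of_summable_norm_sq (hasSum_norm_sq_shiftSeq f).summable⟩
  map_add' f g := by
    ext (_ | k)
    exacts [(add_zero (0 : ℂ)).symm, rfl]
  map_smul' c f := by ext (_ | k) <;> simp [shiftSeq]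
  norm_map' f :=
    (sq_eq_sq₀ (norm_nonneg _) (norm_nonneg _)).1 <|
      (hasSum_norm_sq _).unique (hasSum_norm_sq_shiftSeq f)

@[simp]
theorem shift_apply_zero (f : H2) : shift f 0 = 0 := rfl

@[simp]
theorem shift_apply_succ (f : H2) (k : ℕ) : shift f (k + 1) = f k := rfl

/-- The reproducing kernel `∑ k, (conj a * z) ^ k` of the unweighted Hardy space. -/
def szegoKernel (a : 𝔻) : H2 :=
  ⟨fun k => conj (a : ℂ) ^ k, memℓp_two_of_summable_norm_sq <| by
    simpa [← pow_mul, mul_comm] using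
      summable_geometric_of_lt_one (sq_nonneg ‖(a : ℂ)‖) a.sq_norm_lt_one⟩

@[simp]
theorem szegoKernel_apply (a : 𝔻) (k : ℕ) : szegoKernel a k = conj (a : ℂ) ^ k := rfl

theorem szegoKernel_ne_zero (a : 𝔻) : szegoKernel a ≠ 0 := fun h => by
  simpa using congr($h 0)

theorem hasSum_pow_mul_apply (z : 𝔻) (f : H2) :
    HasSum (fun k => (z : ℂ) ^ k * f k) ⟪szegoKernel z, f⟫_ℂ := by
  simpa using hasSum_conj_mul_apply (szegoKernel z) f

theorem inner_szegoKernel_shift (z : 𝔻) (f : H2) :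
    ⟪szegoKernel z, shift f⟫_ℂ = z * ⟪szegoKernel z, f⟫_ℂ := by
  have hshift := hasSum_pow_mul_apply z (shift f)
  rw [← hasSum_nat_add_iff' 1] at hshift
  refine HasSum.unique ?_ ((hasSum_pow_mul_apply z f).mul_left (z : ℂ))
  simpa [pow_succ', mul_assoc] using hshift

theorem inner_szegoKernel_szegoKernel (z a : 𝔻) :
    ⟪szegoKernel z, szegoKernel a⟫_ℂ = (1 - conj (a : ℂ) * z)⁻¹ := by
  refine (hasSum_pow_mul_apply z (szegoKernel a)).unique ?_
  simpa [mul_pow, mul_comm] using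
    hasSum_geometric_of_norm_lt_one (star a * z).norm_lt_one

theorem mem_span_szegoKernel {a : 𝔻} {q : H2} (hq : ∀ f, ⟪q, shift f⟫_ℂ = a * ⟪q, f⟫_ℂ) :
    q ∈ Submodule.span ℂ {szegoKernel a} := by
  have hsucc (k) : q (k + 1) = conj (a : ℂ) * q k := by
    have hshift : shift (lp.single 2 k 1) = lp.single 2 (k + 1) 1 := by
      ext (_ | l) <;> simp [lp.single_apply, Pi.single_apply]
    have h := hq (lp.single 2 k 1)
    rw [hshift, inner_single_one_right, inner_single_one_right] at h
    simpa using congrArg conj h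
  refine Submodule.mem_span_singleton.2 ⟨q 0, ?_⟩
  ext k
  induction k with
  | zero => simp
  | succ k ih =>
    rw [hsucc, ← ih, lp.coeFn_smul, Pi.smul_apply, Pi.smul_apply, smul_eq_mul, smul_eq_mul,
      szegoKernel_apply, szegoKernel_apply, pow_succ']
    ring

/-- The seminorm `∑ k < N, r ^ k * |f k|`: it bounds the coefficients of index below `N` and, for
`r < 1`, is contracted by the shift. -/
def truncNorm (r : ℝ≥0) (N : ℕ) : Seminorm ℂ H2 :=
  ∑ k ∈ Finset.range N, r ^ k • (normSeminorm ℂ ℂ).comp (lp.evalₗ (fun _ => ℂ) 2 k)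

theorem truncNorm_apply (r : ℝ≥0) (N : ℕ) (f : H2) :
    truncNorm r N f = ∑ k ∈ Finset.range N, (r : ℝ) ^ k * ‖f k‖ := by
  simp [truncNorm, NNReal.smul_def]

theorem truncNorm_shift_le (r : ℝ≥0) (N : ℕ) (f : H2) :
    truncNorm r N (shift f) ≤ r * truncNorm r N f := by
  simp only [truncNorm_apply, Finset.mul_sum]
  cases N with
  | zero => simp
  | succ N =>
    rw [Finset.sum_range_succ', Finset.sum_range_succ]
    simp only [shift_apply_zero, shift_apply_succ, norm_zero, mul_zero, add_zero, pow_succ',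
      mul_assoc]
    exact le_add_of_nonneg_right (by positivity)

theorem pow_mul_norm_apply_le_truncNorm (r : ℝ≥0) (k : ℕ) (f : H2) :
    r ^ k * ‖f k‖ ≤ truncNorm r (k + 1) f := by
  rw [truncNorm_apply]
  exact Finset.single_le_sum (f := fun k => (r : ℝ) ^ k * ‖f k‖) (fun _ _ => by positivity)
    (Finset.self_mem_range_succ k)

theorem truncNorm_le {r : ℝ≥0} (hr : r < 1) (N : ℕ) (f : H2) :
    truncNorm r N f ≤ (1 - r : ℝ)⁻¹ * ‖f‖ := by
  rw [truncNorm_apply]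
  calc ∑ k ∈ Finset.range N, (r : ℝ) ^ k * ‖f k‖ ≤ ∑ k ∈ Finset.range N, (r : ℝ) ^ k * ‖f‖ := by
        gcongr
        exact lp.norm_apply_le_norm two_ne_zero f _
    _ ≤ (1 - r : ℝ)⁻¹ * ‖f‖ := by
        rw [← Finset.sum_mul]
        gcongr
        exact sum_le_hasSum _ (fun _ _ => by positivity)
          (hasSum_geometric_of_lt_one r.coe_nonneg hr)

theorem truncNorm_szegoKernel_le {r : ℝ≥0} {a : 𝔻} (har : ‖(a : ℂ)‖ * r < 1) (N : ℕ) :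
    truncNorm r N (szegoKernel a) ≤ (1 - ‖(a : ℂ)‖ * r)⁻¹ := by
  simp only [truncNorm_apply, szegoKernel_apply, norm_pow, RCLike.norm_conj, ← mul_pow]
  rw [mul_comm (r : ℝ)]
  exact sum_le_hasSum _ (fun _ _ => by positivity) (hasSum_geometric_of_lt_one (by positivity) har)

end HardySpace

section ModerateWeight

/-- A positive weight is moderate if `β k / β n` is at most polynomial in the larger of the ratios
`(k + 1) / (n + 1)` and `(n + 1) / (k + 1)`. Both ratios are bounded through a common bound `K`,
which makes the condition symmetric in `n` and `k`. -/
structure IsModerateWeight (β : ℕ → ℝ) : Prop where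
  pos (k : ℕ) : 0 < β k
  exists_bound : ∃ C : ℝ, 0 ≤ C ∧ ∃ N : ℕ, ∀ (K : ℝ) (n k : ℕ),
    k + 1 ≤ K * (n + 1) → n + 1 ≤ K * (k + 1) → β k ≤ C * K ^ N * β n

namespace IsModerateWeight

variable {β : ℕ → ℝ}

theorem inv (hβ : IsModerateWeight β) : IsModerateWeight β⁻¹ where
  pos k := inv_pos.2 (hβ.pos k)
  exists_bound := by
    obtain ⟨C, hC, N, h⟩ := hβ.exists_bound
    refine ⟨C, hC, N, fun K n k hkn hnk => ?_⟩
    rw [Pi.inv_apply, Pi.inv_apply, ← div_eq_mul_inv, inv_eq_one_div,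
      div_le_div_iff₀ (hβ.pos k) (hβ.pos n), one_mul]
    exact h K k n hnk hkn

theorem exists_div_le (hβ : IsModerateWeight β) :
    ∃ C : ℝ, 0 ≤ C ∧ ∃ N : ℕ, ∀ n k : ℕ,
      β k / β n ≤ C * (((n : ℝ) + 1) ^ N * ((k : ℝ) + 1) ^ N) := by
  obtain ⟨C, hC, N, h⟩ := hβ.exists_bound
  refine ⟨C, hC, N, fun n k => ?_⟩
  rw [div_le_iff₀ (hβ.pos n), ← mul_pow]
  have hn : (0 : ℝ) ≤ n := n.cast_nonneg
  have hk : (0 : ℝ) ≤ k := k.cast_nonneg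
  exact h _ n k (by nlinarith [mul_nonneg hn hk, mul_nonneg hn (mul_nonneg hn hk)])
    (by nlinarith [mul_nonneg hn hk, mul_nonneg hk (mul_nonneg hn hk)])

theorem of_antitone_div_of_monotone_mul (hpos : ∀ k, 0 < β k) {N : ℕ}
    (hdiv : Antitone fun k => β k / ((k : ℝ) + 1) ^ N)
    (hmul : Monotone fun k => β k * ((k : ℝ) + 1) ^ N) : IsModerateWeight β where
  pos := hpos
  exists_bound := by
    refine ⟨1, zero_le_one, N, fun K n k hkn hnk => ?_⟩
    rw [one_mul]
    rcases le_total n k with h | h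
    · have hnk' : β k / ((k : ℝ) + 1) ^ N ≤ β n / ((n : ℝ) + 1) ^ N := hdiv h
      rw [div_le_iff₀ (by positivity)] at hnk'
      calc β k ≤ β n / ((n : ℝ) + 1) ^ N * ((k : ℝ) + 1) ^ N := hnk'
        _ ≤ β n / ((n : ℝ) + 1) ^ N * (K * ((n : ℝ) + 1)) ^ N := by
            gcongr
            exact (div_pos (hpos n) (by positivity)).le
        _ = K ^ N * β n := by rw [mul_pow]; field_simp
    · have hkn' : β k * ((k : ℝ) + 1) ^ N ≤ β n * ((n : ℝ) + 1) ^ N := hmul h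
      refine le_of_mul_le_mul_right ?_ (show 0 < ((k : ℝ) + 1) ^ N by positivity)
      calc β k * ((k : ℝ) + 1) ^ N ≤ β n * ((n : ℝ) + 1) ^ N := hkn'
        _ ≤ β n * (K * ((k : ℝ) + 1)) ^ N := by
            gcongr
            exact (hpos n).le
        _ = K ^ N * β n * ((k : ℝ) + 1) ^ N := by rw [mul_pow]; ring

end IsModerateWeight

theorem betaSeq_succ (w : ℕ → ℝ) (k : ℕ) : betaSeq w (k + 1) = betaSeq w k * w (k + 1) :=
  Finset.prod_Icc_succ_top (by omega) w

theorem betaSeq_inv (w : ℕ → ℝ) : betaSeq w⁻¹ = (betaSeq w)⁻¹ :=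
  funext fun _ => Finset.prod_inv_distrib w

namespace PolyGrowth

variable {w : ℕ → ℝ}

theorem betaSeq_pos (hw : PolyGrowth w) (k : ℕ) : 0 < betaSeq w k :=
  Finset.prod_pos fun j hj => hw.1 j (Finset.mem_Icc.1 hj).1

theorem inv (hw : PolyGrowth w) : PolyGrowth w⁻¹ := by
  obtain ⟨hpos, hlim, M, hM⟩ := hw
  have hlim' : Tendsto w⁻¹ atTop (𝓝 1) := inv_one (G := ℝ) ▸ hlim.inv₀ one_ne_zero
  obtain ⟨b, hb⟩ := hlim'.bddAbove_range
  refine ⟨fun k hk => inv_pos.2 (hpos k hk), hlim', M * b, fun k hk => ?_⟩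
  have hwk := hpos k hk
  have habs : |w⁻¹ k - 1| = |w k - 1| * w⁻¹ k := by
    rw [Pi.inv_apply, ← abs_of_pos (inv_pos.2 hwk), ← abs_mul, abs_of_pos (inv_pos.2 hwk),
      sub_mul, mul_inv_cancel₀ hwk.ne', one_mul, abs_sub_comm]
  have hM0 : 0 ≤ M := (by positivity : (0 : ℝ) ≤ (k + 1) * |w k - 1|).trans (hM k hk)
  rw [habs, ← mul_assoc]
  exact mul_le_mul (hM k hk) (hb (Set.mem_range_self k)) (inv_pos.2 hwk).le hM0

theorem eventually_antitone_betaSeq_div (hw : PolyGrowth w) :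
    ∀ᶠ N : ℕ in atTop, Antitone fun k => betaSeq w k / ((k : ℝ) + 1) ^ N := by
  obtain ⟨-, -, M, hM⟩ := id hw
  filter_upwards [eventually_ge_atTop ⌈M⌉₊] with N hN
  refine antitone_nat_of_succ_le fun k => ?_
  have hk : (0 : ℝ) < k + 1 := by positivity
  have hstep : w (k + 1) * ((k : ℝ) + 1) ^ N ≤ ((k : ℝ) + 2) ^ N := by
    have hw_sub : (w (k + 1) - 1) * (k + 1) ≤ N :=
      calc (w (k + 1) - 1) * (k + 1)
          ≤ |w (k + 1) - 1| * (((k + 1 : ℕ) : ℝ) + 1) := by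
            gcongr
            exacts [le_abs_self _, by linarith]
        _ ≤ M := by rw [mul_comm]; exact hM (k + 1) k.succ_pos
        _ ≤ N := Nat.ceil_le.1 hN
    calc w (k + 1) * ((k : ℝ) + 1) ^ N
        ≤ (1 + N * (1 / ((k : ℝ) + 1))) * ((k : ℝ) + 1) ^ N := by
          gcongr
          rw [mul_one_div, ← sub_le_iff_le_add']
          exact (le_div_iff₀ hk).2 hw_sub
      _ ≤ (1 + 1 / ((k : ℝ) + 1)) ^ N * ((k : ℝ) + 1) ^ N := by
          gcongr
          exact one_add_mul_le_pow ((by norm_num : (-2 : ℝ) ≤ 0).trans (by positivity)) N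
      _ = ((k : ℝ) + 2) ^ N := by
          rw [← mul_pow, add_mul, one_div_mul_cancel hk.ne']
          ring
  rw [betaSeq_succ, div_le_div_iff₀ (by positivity) (by positivity), mul_assoc]
  refine mul_le_mul_of_nonneg_left ?_ (hw.betaSeq_pos k).le
  push_cast
  rwa [add_assoc, one_add_one_eq_two]

theorem isModerateWeight (hw : PolyGrowth w) : IsModerateWeight (betaSeq w) := by
  obtain ⟨N, hdiv, hinv⟩ :=
    (hw.eventually_antitone_betaSeq_div.and hw.inv.eventually_antitone_betaSeq_div).exists
  refine .of_antitone_div_of_monotone_mul hw.betaSeq_pos hdiv fun n k hnk => ?_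
  have h := hinv hnk
  simp only [betaSeq_inv, Pi.inv_apply, div_eq_mul_inv, ← mul_inv] at h
  have hn := hw.betaSeq_pos n
  have hk := hw.betaSeq_pos k
  exact (inv_le_inv₀ (by positivity) (by positivity)).1 h

end PolyGrowth

end ModerateWeight

section Rescaling

open scoped Finset

theorem exists_isBessel_of_norm_le_mul {ι : Type*} {v : ι → ℕ → ℂ} {x : ι → ℝ} {y : ℕ → ℝ}
    (hx : Summable fun i => x i ^ 2) (hy : Summable fun k => y k ^ 2)
    (hv : ∀ i k, ‖v i k‖ ≤ x i * y k) :
    ∃ c : ι → H2, IsBessel ℂ c ∧ ∀ i k, c i k = v i k := by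
  have hle (i k) : ‖v i k‖ ^ 2 ≤ x i ^ 2 * y k ^ 2 := by
    rw [← mul_pow]
    gcongr
    exact hv i k
  have hsummable (i) : Summable fun k => ‖v i k‖ ^ 2 :=
    .of_nonneg_of_le (fun k => by positivity) (hle i) (hy.mul_left _)
  let c (i : ι) : H2 := ⟨v i, memℓp_two_of_summable_norm_sq (hsummable i)⟩
  have hc (i) : ‖c i‖ ^ 2 ≤ x i ^ 2 * ∑' k, y k ^ 2 :=
    hasSum_le (hle i) (hasSum_norm_sq (c i)) (hy.hasSum.mul_left _)
  exact ⟨c, .of_summable_norm_sq (.of_nonneg_of_le (fun i => by positivity) hc (hx.mul_right _)),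
    fun _ _ => rfl⟩

/-- The operator multiplying the coordinates with index in `s` by the values of `w` and
discarding the others. -/
def truncMul (s : Finset ℕ) (w : ℕ → ℝ) (f : H2) : H2 :=
  ∑ k ∈ s, lp.single 2 k (w k * f k)

section truncMul

variable (s : Finset ℕ) (w : ℕ → ℝ) (f : H2)

theorem truncMul_apply (k : ℕ) : truncMul s w f k = if k ∈ s then w k * f k else 0 := by
  rw [truncMul, lp.coeFn_sum, Finset.sum_apply]
  simp [lp.single_apply, Pi.single_apply]

theorem norm_sq_truncMul : ‖truncMul s w f‖ ^ 2 = ∑ k ∈ s, w k ^ 2 * ‖f k‖ ^ 2 := by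
  simpa [truncMul, mul_pow] using
    lp.norm_sum_single (p := 2) (by norm_num) (fun k => (w k : ℂ) * f k) s

theorem inner_truncMul_left (g : H2) : ⟪truncMul s w f, g⟫_ℂ = ⟪f, truncMul s w g⟫_ℂ := by
  simp only [truncMul, sum_inner, inner_sum, lp.inner_single_left, lp.inner_single_right]
  refine Finset.sum_congr rfl fun k _ => ?_
  simp only [RCLike.inner_apply, map_mul, conj_ofReal]
  ring

theorem truncMul_const_mul (b : ℝ) :
    truncMul s (fun k => b * w k) f = (b : ℂ) • truncMul s w f := by
  simp only [truncMul, Finset.smul_sum, ← lp.single_smul]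
  simp [mul_assoc]

end truncMul

/-- The index `q` of the dyadic interval `[2 ^ q, 2 ^ (q + 1))` containing `k + 1`. -/
def dyadicLevel (k : ℕ) : ℕ := Nat.log 2 (k + 1)

theorem two_pow_dyadicLevel_le (k : ℕ) : 2 ^ dyadicLevel k ≤ k + 1 :=
  Nat.pow_log_le_self 2 k.succ_ne_zero

theorem lt_two_pow_dyadicLevel_succ (k : ℕ) : k + 1 < 2 ^ (dyadicLevel k + 1) :=
  Nat.lt_pow_succ_log_self one_lt_two _

/-- The indices whose dyadic level differs from `q` by at most `L`. -/
def dyadicBlock (L q : ℕ) : Finset ℕ :=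
  {k ∈ Finset.range (2 ^ (q + L + 1)) | q ≤ dyadicLevel k + L ∧ dyadicLevel k ≤ q + L}

theorem mem_dyadicBlock {L q k : ℕ} :
    k ∈ dyadicBlock L q ↔ q ≤ dyadicLevel k + L ∧ dyadicLevel k ≤ q + L := by
  simp only [dyadicBlock, Finset.mem_filter, Finset.mem_range, and_iff_right_iff_imp]
  rintro ⟨-, h⟩
  calc k < 2 ^ (dyadicLevel k + 1) := k.lt_succ_self.trans (lt_two_pow_dyadicLevel_succ k)
    _ ≤ 2 ^ (q + L + 1) := Nat.pow_le_pow_right two_pos (by omega)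

theorem dyadicLevel_le_add {L n k : ℕ} (h : k < 2 ^ L * n) :
    dyadicLevel k ≤ dyadicLevel n + L := by
  refine Nat.le_of_lt_succ (Nat.log_lt_of_lt_pow k.succ_ne_zero ?_)
  calc k + 1 ≤ 2 ^ L * n := h
    _ < 2 ^ L * 2 ^ (dyadicLevel n + 1) := by
        gcongr
        exact n.lt_succ_self.trans (lt_two_pow_dyadicLevel_succ n)
    _ = 2 ^ (dyadicLevel n + L + 1) := by rw [← pow_add]; congr 1; omega

theorem le_or_le_of_notMem_dyadicBlock {L n k : ℕ} (h : k ∉ dyadicBlock L (dyadicLevel n)) :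
    2 ^ L * n ≤ k ∨ 2 ^ L * k ≤ n := by
  contrapose! h
  exact mem_dyadicBlock.2 ⟨dyadicLevel_le_add h.2, dyadicLevel_le_add h.1⟩

theorem sum_dyadicBlock_norm_sq_le (L : ℕ) (t : Finset ℕ) (f : H2) :
    ∑ q ∈ t, ∑ k ∈ dyadicBlock L q, ‖f k‖ ^ 2 ≤ (2 * L + 1 : ℕ) * ‖f‖ ^ 2 := by
  have hcard (k : ℕ) : #{q ∈ t | k ∈ dyadicBlock L q} ≤ 2 * L + 1 :=
    calc #{q ∈ t | k ∈ dyadicBlock L q}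
        ≤ #(Finset.Icc (dyadicLevel k - L) (dyadicLevel k + L)) := by
          refine Finset.card_le_card fun q hq => ?_
          have := mem_dyadicBlock.1 (Finset.mem_filter.1 hq).2
          exact Finset.mem_Icc.2 (by omega)
      _ ≤ 2 * L + 1 := by rw [Nat.card_Icc]; omega
  calc ∑ q ∈ t, ∑ k ∈ dyadicBlock L q, ‖f k‖ ^ 2
      = ∑ k ∈ t.biUnion (dyadicBlock L), ∑ q ∈ t with k ∈ dyadicBlock L q, ‖f k‖ ^ 2 :=
        Finset.sum_comm' fun q k => by simp only [Finset.mem_biUnion, Finset.mem_filter]; tauto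
    _ ≤ ∑ k ∈ t.biUnion (dyadicBlock L), (2 * L + 1 : ℕ) * ‖f k‖ ^ 2 := by
        gcongr with k
        rw [Finset.sum_const, nsmul_eq_mul]
        gcongr
        exact hcard k
    _ ≤ (2 * L + 1 : ℕ) * ‖f‖ ^ 2 := by
        rw [← Finset.mul_sum]
        gcongr
        exact sum_le_hasSum _ (fun _ _ => by positivity) (hasSum_norm_sq f)

theorem IsModerateWeight.exists_dyadicBlock_bound {β : ℕ → ℝ} (hβ : IsModerateWeight β) (L : ℕ) :
    ∃ K : ℝ, 0 ≤ K ∧ ∀ q, ∀ k ∈ dyadicBlock L q,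
      β k ≤ K * β (2 ^ q - 1) ∧ β (2 ^ q - 1) ≤ K * β k := by
  obtain ⟨C, hC, N, h⟩ := hβ.exists_bound
  refine ⟨C * (2 ^ (L + 1)) ^ N, by positivity, fun q k hk => ?_⟩
  obtain ⟨hqk, hkq⟩ := mem_dyadicBlock.1 hk
  have hcast : ((2 ^ q - 1 : ℕ) : ℝ) + 1 = 2 ^ q := by
    exact_mod_cast Nat.sub_add_cancel Nat.one_le_two_pow
  have hk_le : k + 1 ≤ 2 ^ (L + 1) * 2 ^ q :=
    calc k + 1 ≤ 2 ^ (dyadicLevel k + 1) := (lt_two_pow_dyadicLevel_succ k).le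
      _ ≤ 2 ^ (L + 1 + q) := Nat.pow_le_pow_right two_pos (by omega)
      _ = 2 ^ (L + 1) * 2 ^ q := pow_add _ _ _
  have hle_k : 2 ^ q ≤ 2 ^ (L + 1) * (k + 1) :=
    calc 2 ^ q ≤ 2 ^ (L + 1 + dyadicLevel k) := Nat.pow_le_pow_right two_pos (by omega)
      _ = 2 ^ (L + 1) * 2 ^ dyadicLevel k := pow_add _ _ _
      _ ≤ 2 ^ (L + 1) * (k + 1) := by gcongr; exact two_pow_dyadicLevel_le k
  constructor <;> apply h <;> rw [hcast] <;> exact_mod_cast ‹_›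

theorem IsBessel.truncMul_dyadicBlock {u : ℕ → H2} (hu : IsBessel ℂ u) {β : ℕ → ℝ}
    (hβ : IsModerateWeight β) (L : ℕ) :
    IsBessel ℂ fun n =>
      truncMul (dyadicBlock L (dyadicLevel n)) (fun k => (β n)⁻¹ * β k) (u n) := by
  obtain ⟨K, hK, hKβ⟩ := hβ.exists_dyadicBlock_bound L
  refine hu.of_norm_inner_le dyadicLevel (A := (K * K) ^ 2 * (2 * L + 1 : ℕ))
    (P := fun q => truncMul (dyadicBlock L q) fun k => K * (β (2 ^ q - 1))⁻¹ * β k)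
    (by positivity) (fun f t => ?_) fun n f => ?_
  · calc ∑ q ∈ t, ‖truncMul (dyadicBlock L q) (fun k => K * (β (2 ^ q - 1))⁻¹ * β k) f‖ ^ 2
        ≤ ∑ q ∈ t, ∑ k ∈ dyadicBlock L q, (K * K) ^ 2 * ‖f k‖ ^ 2 := by
          gcongr with q
          rw [norm_sq_truncMul]
          gcongr ∑ _ ∈ _, ?_ ^ 2 * _ with k hk
          · exact mul_nonneg (mul_nonneg hK (inv_pos.2 (hβ.pos _)).le) (hβ.pos k).le
          · rw [mul_assoc]
            refine mul_le_mul_of_nonneg_left ?_ hK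
            exact (inv_mul_le_iff₀' (hβ.pos _)).2 (hKβ q k hk).1
      _ ≤ (K * K) ^ 2 * (2 * L + 1 : ℕ) * ‖f‖ ^ 2 := by
          simp only [← Finset.mul_sum, mul_assoc]
          gcongr
          simpa [mul_assoc] using sum_dyadicBlock_norm_sq_le L t f
  · have hγ := hβ.pos (2 ^ dyadicLevel n - 1)
    have hn := hβ.pos n
    have hle : (β n)⁻¹ ≤ K * (β (2 ^ dyadicLevel n - 1))⁻¹ := by
      rw [← div_eq_mul_inv, le_div_iff₀ hγ, inv_mul_le_iff₀' hn]
      exact (hKβ _ n (mem_dyadicBlock.2 ⟨by omega, by omega⟩)).2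
    rw [inner_truncMul_left]
    simp only [truncMul_const_mul, inner_smul_right, norm_mul, Complex.norm_real]
    gcongr
    rwa [← norm_mul, Real.norm_of_nonneg (by positivity), Real.norm_of_nonneg (by positivity)]

/-- The coordinates of `u n` decay exponentially, jointly in `n` and `k`, outside a sector
`n ≤ D * k`, `k ≤ D * n` around the diagonal. -/
def IsLocalized (u : ℕ → H2) : Prop :=
  ∃ (C τ : ℝ) (D : ℕ), 0 ≤ C ∧ 0 < τ ∧ τ < 1 ∧
    ∀ n k, (D * n ≤ k ∨ D * k ≤ n) → ‖u n k‖ ≤ C * (τ ^ n * τ ^ k)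

theorem exists_pow_mul_pow_le_of_mul_le {ρ Y : ℝ} (hρ0 : 0 < ρ) (hρ1 : ρ < 1) (hY : 0 < Y) :
    ∃ D : ℕ, ∀ n k : ℕ, D * n ≤ k → Y ^ n * ρ ^ k ≤ √ρ ^ n * √ρ ^ k := by
  have hτ0 : 0 < √ρ := Real.sqrt_pos.2 hρ0
  have hτ1 : √ρ < 1 := (Real.sqrt_lt' one_pos).2 (by rwa [one_pow])
  obtain ⟨D, hD⟩ := exists_pow_lt_of_lt_one (div_pos hτ0 hY) hτ1
  refine ⟨D, fun n k h => ?_⟩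
  calc Y ^ n * ρ ^ k = Y ^ n * √ρ ^ k * √ρ ^ k := by
        rw [mul_assoc, ← mul_pow, Real.mul_self_sqrt hρ0.le]
    _ ≤ Y ^ n * √ρ ^ (D * n) * √ρ ^ k := by
        gcongr ?_ * ?_ * _
        exact pow_le_pow_of_le_one hτ0.le hτ1.le h
    _ = (√ρ ^ D * Y) ^ n * √ρ ^ k := by rw [pow_mul, ← mul_pow, mul_comm Y]
    _ ≤ √ρ ^ n * √ρ ^ k := by
        gcongr
        exact ((lt_div_iff₀ hY).1 hD).le

theorem IsLocalized.of_norm_apply_le {u : ℕ → H2} {C₁ C₂ ρ₁ ρ₂ Y₁ Y₂ : ℝ}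
    (hρ₁0 : 0 < ρ₁) (hρ₁1 : ρ₁ < 1) (hρ₂0 : 0 < ρ₂) (hρ₂1 : ρ₂ < 1) (hY₁ : 0 < Y₁) (hY₂ : 0 < Y₂)
    (hu₁ : ∀ n k, ‖u n k‖ ≤ C₁ * (Y₁ ^ n * ρ₁ ^ k))
    (hu₂ : ∀ n k, ‖u n k‖ ≤ C₂ * (Y₂ ^ k * ρ₂ ^ n)) : IsLocalized u := by
  obtain ⟨D₁, hD₁⟩ := exists_pow_mul_pow_le_of_mul_le hρ₁0 hρ₁1 hY₁
  obtain ⟨D₂, hD₂⟩ := exists_pow_mul_pow_le_of_mul_le hρ₂0 hρ₂1 hY₂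
  have hC₁ : 0 ≤ C₁ := by simpa using (norm_nonneg _).trans (hu₁ 0 0)
  have hC₂ : 0 ≤ C₂ := by simpa using (norm_nonneg _).trans (hu₂ 0 0)
  refine ⟨max C₁ C₂, √(max ρ₁ ρ₂), max D₁ D₂, le_max_of_le_left hC₁,
    Real.sqrt_pos.2 (lt_max_of_lt_left hρ₁0),
    (Real.sqrt_lt' one_pos).2 (by rw [one_pow]; exact max_lt hρ₁1 hρ₂1), fun n k hnk => ?_⟩
  rcases hnk with hnk | hnk
  · calc ‖u n k‖ ≤ C₁ * (Y₁ ^ n * ρ₁ ^ k) := hu₁ n k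
      _ ≤ C₁ * (√ρ₁ ^ n * √ρ₁ ^ k) :=
          mul_le_mul_of_nonneg_left
            (hD₁ n k ((Nat.mul_le_mul_right n (le_max_left D₁ D₂)).trans hnk)) hC₁
      _ ≤ max C₁ C₂ * (√(max ρ₁ ρ₂) ^ n * √(max ρ₁ ρ₂) ^ k) := by
          gcongr <;> exact le_max_left _ _
  · calc ‖u n k‖ ≤ C₂ * (Y₂ ^ k * ρ₂ ^ n) := hu₂ n k
      _ ≤ C₂ * (√ρ₂ ^ n * √ρ₂ ^ k) := by
          rw [mul_comm (√ρ₂ ^ n)]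
          exact mul_le_mul_of_nonneg_left
            (hD₂ k n ((Nat.mul_le_mul_right k (le_max_right D₁ D₂)).trans hnk)) hC₂
      _ ≤ max C₁ C₂ * (√(max ρ₁ ρ₂) ^ n * √(max ρ₁ ρ₂) ^ k) := by
          gcongr <;> exact le_max_right _ _

theorem summable_geometric_mul_pow_sq {τ : ℝ} (hτ0 : 0 < τ) (hτ1 : τ < 1) (N : ℕ) :
    Summable fun k : ℕ => (τ ^ k * ((k : ℝ) + 1) ^ N) ^ 2 := by
  have hτ : ‖τ ^ 2‖ < 1 := by
    rw [Real.norm_of_nonneg (by positivity)]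
    exact pow_lt_one₀ hτ0.le hτ1 two_ne_zero
  have h : Summable fun k : ℕ => ((k + 1 : ℕ) : ℝ) ^ (2 * N) * (τ ^ 2) ^ (k + 1) :=
    (summable_nat_add_iff (f := fun k : ℕ => (k : ℝ) ^ (2 * N) * (τ ^ 2) ^ k) 1).2
      (summable_pow_mul_geometric_of_norm_lt_one _ hτ)
  refine (h.mul_left (τ ^ 2)⁻¹).congr fun k => ?_
  push_cast
  field_simp
  ring

theorem IsLocalized.exists_isBessel_rescale {u : ℕ → H2} (hu : IsLocalized u)
    (hu' : IsBessel ℂ u) {β : ℕ → ℝ} (hβ : IsModerateWeight β) :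
    ∃ c : ℕ → H2, IsBessel ℂ c ∧ ∀ n k, c n k = u n k * (β k / β n : ℝ) := by
  obtain ⟨C, τ, D, hC, hτ0, hτ1, hτ⟩ := hu
  obtain ⟨A, hA, N, hAβ⟩ := hβ.exists_div_le
  obtain ⟨L, hL⟩ : ∃ L, D ≤ 2 ^ L := ⟨D, Nat.lt_two_pow_self.le⟩
  let y (k : ℕ) : ℝ := τ ^ k * ((k : ℝ) + 1) ^ N
  have hy : Summable fun k => y k ^ 2 := summable_geometric_mul_pow_sq hτ0 hτ1 N
  have hfar (n k : ℕ) :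
      ‖if k ∈ dyadicBlock L (dyadicLevel n) then 0 else u n k * (β k / β n : ℝ)‖
        ≤ C * A * y n * y k := by
    split_ifs with hk
    · rw [norm_zero]
      positivity
    · have hnk := (le_or_le_of_notMem_dyadicBlock hk).imp
        (Nat.mul_le_mul_right _ hL).trans (Nat.mul_le_mul_right _ hL).trans
      rw [norm_mul, Complex.norm_real,
        Real.norm_of_nonneg (div_pos (hβ.pos k) (hβ.pos n)).le]
      calc ‖u n k‖ * (β k / β n)
          ≤ C * (τ ^ n * τ ^ k) * (A * (((n : ℝ) + 1) ^ N * ((k : ℝ) + 1) ^ N)) := by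
            gcongr
            exacts [(div_pos (hβ.pos k) (hβ.pos n)).le, hτ n k hnk, hAβ n k]
        _ = C * A * y n * y k := by ring
  have hx : Summable fun n => (C * A * y n) ^ 2 := by
    simpa only [mul_pow _ (y _)] using hy.mul_left ((C * A) ^ 2)
  obtain ⟨far, hfar', hfar_apply⟩ := exists_isBessel_of_norm_le_mul hx hy hfar
  refine ⟨_, (hu'.truncMul_dyadicBlock hβ L).add hfar', fun n k => ?_⟩
  rw [lp.coeFn_add, Pi.add_apply, truncMul_apply, hfar_apply, ← div_eq_inv_mul]
  split_ifs
  · rw [add_zero, mul_comm]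
  · rw [zero_add]

end Rescaling

section HardyBlaschke

variable {ι : Type*} {a : ι → 𝔻} {s : Finset ι} {r : ℝ≥0}

theorem exists_one_lt_forall_norm_mul_lt_one [Finite ι] (a : ι → 𝔻) :
    ∃ R : ℝ≥0, 1 < R ∧ ∀ j, ‖(a j : ℂ)‖ * R < 1 := by
  have hR : ∀ᶠ R : ℝ≥0 in 𝓝[>] 1, ∀ j, ‖(a j : ℂ)‖ * R < 1 := by
    refine nhdsWithin_le_nhds (eventually_all.2 fun j => ?_)
    have hcont : ContinuousAt (fun R : ℝ≥0 => ‖(a j : ℂ)‖ * R) 1 := by fun_prop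
    exact hcont.eventually_lt_const (by simpa using (a j).norm_lt_one)
  exact (eventually_mem_nhdsWithin.and hR).exists

theorem truncNorm_blaschkeMap_le (har : ∀ j, ‖(a j : ℂ)‖ * r < 1) (N : ℕ) (f : H2) :
    truncNorm r N (blaschkeMap shift a s f) ≤ blaschkeBound a s r * truncNorm r N f :=
  seminorm_blaschkeMap_le r.coe_nonneg har (truncNorm_shift_le r N) f

theorem pow_mul_norm_pow_blaschkeMap_apply_le (har : ∀ j, ‖(a j : ℂ)‖ * r < 1) {f : H2} {C : ℝ}
    (hf : ∀ N, truncNorm r N f ≤ C) (n k : ℕ) :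
    r ^ k * ‖(blaschkeMap shift a s ^ n) f k‖ ≤ C * blaschkeBound a s r ^ n := by
  have hγ := blaschkeBound_nonneg (s := s) r.coe_nonneg har
  calc r ^ k * ‖(blaschkeMap shift a s ^ n) f k‖
      ≤ truncNorm r (k + 1) ((blaschkeMap shift a s ^ n) f) :=
        pow_mul_norm_apply_le_truncNorm r k _
    _ ≤ blaschkeBound a s r ^ n * truncNorm r (k + 1) f :=
        seminorm_pow_map_le hγ (truncNorm_blaschkeMap_le har _) n f
    _ ≤ C * blaschkeBound a s r ^ n := by
        rw [mul_comm C]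
        gcongr
        exact hf _

theorem eq_zero_of_forall_mem_range_pow_blaschkeMap (hs : s.Nonempty) {f : H2}
    (hf : ∀ n, ∃ g, (blaschkeMap shift a s ^ n) g = f) : f = 0 := by
  obtain ⟨r, hr0, hr1, hγ⟩ := exists_blaschkeBound_lt_one (a := a) hs
  lift r to ℝ≥0 using hr0.le
  have har (j) : ‖(a j : ℂ)‖ * r < 1 := mul_lt_one_of_nonneg_of_lt_one_left
    (norm_nonneg _) (a j).norm_lt_one hr1.le
  have hγ0 := blaschkeBound_nonneg (s := s) r.coe_nonneg har
  have hbound (k n : ℕ) :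
      r ^ k * ‖f k‖ ≤ (1 - r : ℝ)⁻¹ * ‖f‖ * blaschkeBound a s r ^ n := by
    obtain ⟨g, rfl⟩ := hf n
    rw [LinearIsometry.norm_map]
    exact pow_mul_norm_pow_blaschkeMap_apply_le har (truncNorm_le hr1 · g) n k
  ext k
  have hlim := (tendsto_pow_atTop_nhds_zero_of_lt_one hγ0 hγ).const_mul ((1 - r : ℝ)⁻¹ * ‖f‖)
  rw [mul_zero] at hlim
  have hle : r ^ k * ‖f k‖ ≤ 0 := ge_of_tendsto' hlim (hbound k)
  exact norm_le_zero_iff.1 (nonpos_of_mul_nonpos_right hle (pow_pos hr0 k))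

theorem isLocalized_pow_blaschkeMap [Finite ι] (hs : s.Nonempty) {f : H2}
    (hf : ∀ r : ℝ≥0, (∀ j, ‖(a j : ℂ)‖ * r < 1) → ∃ C, ∀ N, truncNorm r N f ≤ C) :
    IsLocalized fun n => (blaschkeMap shift a s ^ n) f := by
  obtain ⟨R, hR1, haR⟩ := exists_one_lt_forall_norm_mul_lt_one a
  obtain ⟨r, hr0, hr1, hγ⟩ := exists_blaschkeBound_lt_one (a := a) hs
  lift r to ℝ≥0 using hr0.le
  have har (j) : ‖(a j : ℂ)‖ * r < 1 := mul_lt_one_of_nonneg_of_lt_one_left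
    (norm_nonneg _) (a j).norm_lt_one hr1.le
  obtain ⟨C, hC⟩ := hf R haR
  have hR0 : (0 : ℝ) < R := one_pos.trans hR1
  refine .of_norm_apply_le (C₁ := C) (C₂ := (1 - r : ℝ)⁻¹ * ‖f‖) (inv_pos.2 hR0)
    (inv_lt_one_of_one_lt₀ hR1) (blaschkeBound_pos hr0 har) hγ (blaschkeBound_pos (s := s) hR0 haR)
    (inv_pos.2 hr0) (fun n k => ?_) fun n k => ?_
  · rw [inv_pow, ← mul_assoc, ← div_eq_mul_inv, le_div_iff₀' (by positivity)]
    exact pow_mul_norm_pow_blaschkeMap_apply_le haR hC n k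
  · rw [mul_left_comm, inv_pow, inv_mul_eq_div, le_div_iff₀' (by positivity)]
    exact pow_mul_norm_pow_blaschkeMap_apply_le har (truncNorm_le hr1 · f) n k

end HardyBlaschke

section KernelFamilies

variable {ι : Type*} {a : ι → 𝔻} {s : Finset ι}

theorem isLocalized_pow_blaschkeMap_szegoKernel [Finite ι] (hs : s.Nonempty) (j : ι) :
    IsLocalized fun n => (blaschkeMap shift a s ^ n) (szegoKernel (a j)) :=
  isLocalized_pow_blaschkeMap hs fun _ har => ⟨_, truncNorm_szegoKernel_le (har j)⟩

theorem isLocalized_pow_blaschkeMap_blaschkeDual [Finite ι] [DecidableEq ι] (hs : s.Nonempty)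
    (j : ι) : IsLocalized fun n =>
      (blaschkeMap shift a s ^ n) (blaschkeDual shift a s (szegoKernel (a j)) j) := by
  refine isLocalized_pow_blaschkeMap hs fun r har => ?_
  set c := (⟪szegoKernel (a j), blaschkeMap shift a (s.erase j) (szegoKernel (a j))⟫_ℂ)⁻¹ with hc
  refine ⟨‖c‖ * (blaschkeBound a (s.erase j) r * (1 - ‖(a j : ℂ)‖ * r)⁻¹), fun N => ?_⟩
  rw [blaschkeDual, ← hc, map_smul_eq_mul]
  have := blaschkeBound_nonneg (s := s.erase j) r.coe_nonneg har
  gcongr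
  calc truncNorm r N (blaschkeMap shift a (s.erase j) (szegoKernel (a j)))
      ≤ blaschkeBound a (s.erase j) r * truncNorm r N (szegoKernel (a j)) :=
        truncNorm_blaschkeMap_le har N _
    _ ≤ blaschkeBound a (s.erase j) r * (1 - ‖(a j : ℂ)‖ * r)⁻¹ := by
        gcongr
        exact truncNorm_szegoKernel_le (har j) N

variable [Fintype ι]

theorem eq_zero_of_forall_inner_pow_blaschkeMap_szegoKernel [Nonempty ι]
    (ha : Function.Injective a) {f : H2}
    (hf : ∀ j n, ⟪(blaschkeMap shift a .univ ^ n) (szegoKernel (a j)), f⟫_ℂ = 0) : f = 0 :=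
  eq_zero_of_forall_mem_range_pow_blaschkeMap Finset.univ_nonempty <|
    mem_range_pow_blaschkeMap ha (fun _ _ => mem_span_szegoKernel) hf

theorem repFun_eq_of_apply_eq_pow_blaschkeMap {β : ℕ → ℝ} (hβ : ∀ k, β k ≠ 0) {c : H2} {n : ℕ}
    {j : ι} (hc : ∀ k, c k =
      (blaschkeMap shift a .univ ^ n) (szegoKernel (a j)) k * (β k / β n : ℝ)) (z : 𝔻) :
    repFun β c z = (∏ i, mobius (a i) z) ^ n / (β n * (1 - conj (a j : ℂ) * z)) := by
  have hsum := hasSum_pow_mul_apply z ((blaschkeMap shift a .univ ^ n) (szegoKernel (a j)))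
  rw [inner_map_pow_of_inner_map (inner_blaschkeMap (inner_szegoKernel_shift z)),
    inner_szegoKernel_szegoKernel] at hsum
  have hcoeff (k : ℕ) : c k / β k * (z : ℂ) ^ k =
      (z : ℂ) ^ k * (blaschkeMap shift a .univ ^ n) (szegoKernel (a j)) k / β n := by
    have := ofReal_ne_zero.2 (hβ k)
    rw [hc]
    push_cast
    field_simp
  rw [repFun, tsum_congr hcoeff, (hsum.div_const _).tsum_eq, ← div_eq_mul_inv, div_div,
    mul_comm (1 - _)]

end KernelFamilies

theorem statement13_general {β : ℕ → ℝ} (hβ : IsModerateWeight β) {ι : Type} [Fintype ι]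
    [Nonempty ι] {a : ι → 𝔻} (ha : Function.Injective a) :
    ∃ c : ι × ℕ → H2,
      (∀ j n (z : 𝔻), repFun β (c (j, n)) z =
        (∏ i, mobius (a i) z) ^ n / (β n * (1 - conj (a j : ℂ) * z))) ∧
      RieszBasis c := by
  classical
  let x (j : ι) (n : ℕ) := (blaschkeMap shift a .univ ^ n) (szegoKernel (a j))
  let y (j : ι) (n : ℕ) :=
    (blaschkeMap shift a .univ ^ n) (blaschkeDual shift a .univ (szegoKernel (a j)) j)
  have hβ0 (k) : β k ≠ 0 := (hβ.pos k).ne'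
  have hx (j) : IsBessel ℂ (x j) := isBessel_pow_map _ <|
    inner_blaschkeMap_eq_zero (Finset.mem_univ j) (inner_szegoKernel_shift (a j))
  have hy (j) : IsBessel ℂ (y j) := isBessel_pow_map _ <|
    inner_blaschkeDual_map (Finset.mem_univ j) (inner_szegoKernel_shift (a j))
  have hxy := inner_pow_blaschkeDual ha (fun j => szegoKernel_ne_zero (a j))
    fun j => inner_szegoKernel_shift (a j)
  choose x' hx' hxx' using fun j =>
    (isLocalized_pow_blaschkeMap_szegoKernel Finset.univ_nonempty j).exists_isBessel_rescale
      (hx j) hβ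
  choose y' hy' hyy' using fun j =>
    (isLocalized_pow_blaschkeMap_blaschkeDual Finset.univ_nonempty j).exists_isBessel_rescale
      (hy j) hβ.inv
  refine ⟨fun p => x' p.1 p.2,
    fun j n => repFun_eq_of_apply_eq_pow_blaschkeMap hβ0 (hxx' j n), ?_⟩
  exact IsBessel.rieszBasis_of_rescaled (s := fun p => β p.2) (fun p => hβ0 p.2) hβ0
    (.uncurry hx) (.uncurry hy) hxy
    (IsBessel.adjoint_analysis_comp_analysis _ _ hxy fun f hf =>
      eq_zero_of_forall_inner_pow_blaschkeMap_szegoKernel ha fun j n => hf (j, n))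
    (.uncurry hx') (.uncurry hy') (fun p => hxx' p.1 p.2)
    fun p k => by simpa only [Pi.inv_apply, inv_div_inv] using hyy' p.1 p.2 k

/-- Let `H²_β` be of polynomial growth and let
`B(z) = ∏_{j=1}^m (z_j - z)/(1 - conj z_j · z)` be a Blaschke product with `m`
distinct zeros.  Then the family `{B^n/(β_n (1 - conj z_j · z))}` is a Riesz basis
of `H²_β`. -/
theorem statement13 (w : ℕ → ℝ) (hw : PolyGrowth w) (m : ℕ) (hm : 0 < m)
    (zs : Fin m → ℂ) (hzs : ∀ j, zs j ∈ unitDisk) (hinj : Function.Injective zs)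
    (B : ℂ → ℂ) (hB : ∀ z, B z = ∏ j, mobius (zs j) z) :
    ∃ c : Fin m × ℕ → H2,
      (∀ (j : Fin m) (n : ℕ), ∀ z ∈ unitDisk,
        repFun (betaSeq w) (c (j, n)) z =
          B z ^ n / ((betaSeq w n : ℂ) * (1 - (starRingEnd ℂ) (zs j) * z))) ∧
      RieszBasis c := by
  obtain rfl : B = fun z => ∏ j, mobius (zs j) z := funext hB
  have : NeZero m := ⟨hm.ne'⟩
  have hlt {z : ℂ} (hz : z ∈ unitDisk) : ‖z‖ < 1 := mem_ball_zero_iff.1 hz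
  let a (j : Fin m) : 𝔻 := .mk (zs j) (hlt (hzs j))
  have ha : Function.Injective a := fun i j hij => hinj congr((↑$hij : ℂ))
  obtain ⟨c, hc, hRiesz⟩ := statement13_general hw.isModerateWeight ha
  exact ⟨c, fun j n z hz => hc j n (.mk z (hlt hz)), hRiesz⟩
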